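/- Let p > 1 and a, b, L > 0. There exists a C¹ weak solution u of −Δ^{a,b}_p u = λ^{a,b}_{1,p}(0,L) |u|^{p−2} u on (0,L) with u(0) = u(L) = 0, u > 0 on (0,L), such that −u is also a weak solution of the same equation, if and only if a = b. (Equivalently, the eigenspace of λ^{a,b}_{1,p}(0,L) consists of two collinear half-lines if and only if a = b.) -/

import Mathlib

open Set

/-- `u` is C¹ on `[α, γ]` with derivative `u'` there. -/
def C1On (α γ : ℝ) (u u' : ℝ → ℝ) : Prop :=
  (∀ t ∈ Set.Icc α γ, HasDerivWithinAt u (u' t) (Set.Icc α γ) t) ∧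
  ContinuousOn u' (Set.Icc α γ)

/-- Admissible functions on `[0, L]`: C¹ with zero boundary values. -/
def Adm (L : ℝ) (u u' : ℝ → ℝ) : Prop :=
  C1On 0 L u u' ∧ u 0 = 0 ∧ u L = 0

/-- The asymmetric energy integrand `a^p (s⁺)^p + b^p (s⁻)^p`. -/
noncomputable def asymE (p a b s : ℝ) : ℝ :=
  a ^ p * (max s 0) ^ p + b ^ p * (max (-s) 0) ^ p

/-- The asymmetric flux `a^p (s⁺)^(p-1) - b^p (s⁻)^(p-1)`. -/
noncomputable def asymFlux (p a b s : ℝ) : ℝ :=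
  a ^ p * (max s 0) ^ (p - 1) - b ^ p * (max (-s) 0) ^ (p - 1)

/-- The first Dirichlet eigenvalue `λ^{a,b}_{1,p}(0,L)`, as the infimum of the
asymmetric energy over normalized admissible functions. -/
noncomputable def lam1 (p a b L : ℝ) : ℝ :=
  sInf { E : ℝ | ∃ u u' : ℝ → ℝ, Adm L u u' ∧
    (∫ t in (0:ℝ)..L, |u t| ^ p) = 1 ∧
    E = ∫ t in (0:ℝ)..L, asymE p a b (u' t) }

/-- `u` (a C¹ function on `[0,L]` with derivative `u'` and zero boundary values)
is a weak solution of `-Δ^{a,b}_p u = g` on `(0,L)`. -/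
def IsWeakSol (p a b L : ℝ) (u u' g : ℝ → ℝ) : Prop :=
  Adm L u u' ∧
  ∀ φ φ' : ℝ → ℝ, Adm L φ φ' →
    (∫ t in (0:ℝ)..L, asymFlux p a b (u' t) * φ' t) =
      ∫ t in (0:ℝ)..L, g t * φ t

/-!
If `u` and `-u` both solve the equation, adding the two weak formulations cancels the right-hand
sides and leaves `(a ^ p - b ^ p) ∫ |u'| ^ (p - 1) φ' = 0` for every test function `φ`. For `a ≠ b`
the lemma of du Bois-Reymond makes `|u'|` constant; since `u'` vanishes somewhere by Rolle's
theorem, `u = 0`.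

For `a = b` everything rests on the Riccati equation `T' = μ + (p - 1) |T| ^ q` satisfied by
`T = -|u'| ^ (p - 2) u' / u ^ (p - 1)`, which a generalized tangent solves. The solution that blows
up exactly at `0` and `L` gives back a positive eigenfunction. A solution finite on `[0, L]` gives
`μ ∫ |v| ^ p ≤ ∫ |v'| ^ p`, on integrating `(T |v| ^ p)'` and using Young's inequality. Letting the
blow-up points approach `0` and `L`, the same `μ` is the best constant, so the eigenvalue of the
eigenfunction is the infimum `lam1`.
-/

open Filter Topology MeasureTheory

section SignedPower

/-- The odd power `|s| ^ r sgn s`, through which the symmetric `p`-Laplacian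
`(|u'| ^ (p - 2) u')'` is written with `r = p - 1`. -/
noncomputable def signedRpow (s r : ℝ) : ℝ := SignType.sign s * |s| ^ r

lemma signedRpow_neg (s r : ℝ) : signedRpow (-s) r = -signedRpow s r := by
  simp only [signedRpow, Left.sign_neg, SignType.coe_neg, abs_neg, neg_mul]

lemma signedRpow_of_pos {s : ℝ} (hs : 0 < s) (r : ℝ) : signedRpow s r = s ^ r := by
  rw [signedRpow, sign_pos hs, SignType.coe_one, one_mul, abs_of_pos hs]

lemma signedRpow_mul (s t r : ℝ) : signedRpow (s * t) r = signedRpow s r * signedRpow t r := by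
  simp only [signedRpow, sign_mul, SignType.coe_mul, abs_mul,
    Real.mul_rpow (abs_nonneg s) (abs_nonneg t)]
  ring

lemma abs_signedRpow (s : ℝ) {r : ℝ} (hr : r ≠ 0) : |signedRpow s r| = |s| ^ r := by
  rcases lt_trichotomy s 0 with hs | rfl | hs
  · rw [← abs_neg, ← signedRpow_neg, signedRpow_of_pos (neg_pos.2 hs), abs_of_neg hs,
      abs_of_pos (Real.rpow_pos_of_pos (neg_pos.2 hs) r)]
  · simp [signedRpow, Real.zero_rpow hr]
  · rw [signedRpow_of_pos hs, abs_of_pos hs, abs_of_pos (Real.rpow_pos_of_pos hs r)]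

lemma signedRpow_signedRpow (s r r' : ℝ) :
    signedRpow (signedRpow s r) r' = signedRpow s (r * r') := by
  rcases lt_trichotomy s 0 with hs | rfl | hs
  · have hs' : 0 < -s := neg_pos.2 hs
    rw [← neg_neg s, signedRpow_neg (-s), signedRpow_neg, signedRpow_neg (-s),
      signedRpow_of_pos hs', signedRpow_of_pos hs',
      signedRpow_of_pos (Real.rpow_pos_of_pos hs' r), Real.rpow_mul hs'.le]
  · simp [signedRpow]
  · rw [signedRpow_of_pos hs, signedRpow_of_pos hs,
      signedRpow_of_pos (Real.rpow_pos_of_pos hs r), Real.rpow_mul hs.le]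

lemma signedRpow_one (s : ℝ) : signedRpow s 1 = s := by
  rw [signedRpow, Real.rpow_one, sign_mul_abs]

lemma self_mul_signedRpow (s : ℝ) {r : ℝ} (hr : r + 1 ≠ 0) :
    s * signedRpow s r = |s| ^ (r + 1) := by
  rw [signedRpow, ← mul_assoc, self_mul_sign, Real.rpow_add_one' (abs_nonneg s) hr, mul_comm]

lemma abs_rpow_sub_two_mul_self (s r : ℝ) : |s| ^ (r - 2) * s = signedRpow s (r - 1) := by
  rcases eq_or_ne s 0 with rfl | hs
  · simp [signedRpow]
  · calc |s| ^ (r - 2) * s = |s| ^ (r - 2) * (SignType.sign s * |s|) := by rw [sign_mul_abs]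
      _ = SignType.sign s * (|s| ^ (r - 2) * |s|) := by ring
      _ = signedRpow s (r - 1) := by
        rw [signedRpow, ← Real.rpow_add_one (abs_ne_zero.2 hs), show r - 2 + 1 = r - 1 by ring]

lemma max_rpow_sub_max_neg_rpow (s : ℝ) {r : ℝ} (hr : r ≠ 0) :
    max s 0 ^ r - max (-s) 0 ^ r = signedRpow s r := by
  rcases lt_trichotomy s 0 with hs | rfl | hs
  · rw [max_eq_right hs.le, max_eq_left (neg_pos.2 hs).le, Real.zero_rpow hr, zero_sub,
      ← signedRpow_of_pos (neg_pos.2 hs), signedRpow_neg, neg_neg]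
  · simp [signedRpow]
  · rw [max_eq_left hs.le, max_eq_right (neg_neg_of_pos hs).le, Real.zero_rpow hr, sub_zero,
      signedRpow_of_pos hs]

lemma continuous_signedRpow {r : ℝ} (hr : 0 < r) : Continuous fun s ↦ signedRpow s r := by
  have hr' := hr.le
  simp only [← max_rpow_sub_max_neg_rpow _ hr.ne']
  fun_prop (disch := assumption)

lemma hasDerivAt_abs_rpow_signedRpow (s : ℝ) {r : ℝ} (hr : 1 < r) :
    HasDerivAt (fun s : ℝ ↦ |s| ^ r) (r * signedRpow s (r - 1)) s := by
  simpa only [mul_assoc, abs_rpow_sub_two_mul_self] using hasDerivAt_abs_rpow s hr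

end SignedPower

section AsymmetricIntegrands

variable {p : ℝ} (a b s : ℝ)

lemma continuous_asymFlux (hp : 1 < p) : Continuous (asymFlux p a b) := by
  have hp' : 0 ≤ p - 1 := by linarith
  unfold asymFlux
  fun_prop (disch := assumption)

lemma asymFlux_add_asymFlux_neg (hp : 1 < p) :
    asymFlux p a b s + asymFlux p a b (-s) = (a ^ p - b ^ p) * |s| ^ (p - 1) := by
  have h0 : (0 : ℝ) ^ (p - 1) = 0 := Real.zero_rpow (by linarith)
  rcases le_total 0 s with hs | hs
  · simp only [asymFlux, neg_neg, max_eq_left hs, max_eq_right (neg_nonpos.2 hs), h0,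
      abs_of_nonneg hs]
    ring
  · simp only [asymFlux, neg_neg, max_eq_right hs, max_eq_left (neg_nonneg.2 hs), h0,
      abs_of_nonpos hs]
    ring

lemma asymFlux_mul_self (hp : 1 < p) : asymFlux p a b s * s = asymE p a b s := by
  have h1 : (0 : ℝ) ^ (p - 1) = 0 := Real.zero_rpow (by linarith)
  have h0 : (0 : ℝ) ^ p = 0 := Real.zero_rpow (by linarith)
  have hpow {r : ℝ} (hr : 0 ≤ r) : r ^ p = r ^ (p - 1) * r := by
    rw [← Real.rpow_add_one' hr (by linarith), sub_add_cancel]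
  rcases le_total 0 s with hs | hs
  · simp only [asymFlux, asymE, max_eq_left hs, max_eq_right (neg_nonpos.2 hs), h0, h1, hpow hs]
    ring
  · simp only [asymFlux, asymE, max_eq_right hs, max_eq_left (neg_nonneg.2 hs), h0, h1,
      hpow (neg_nonneg.2 hs)]
    ring

lemma asymE_mul {c : ℝ} (hc : 0 ≤ c) : asymE p a b (c * s) = c ^ p * asymE p a b s := by
  have hmax (r : ℝ) : max (c * r) 0 ^ p = c ^ p * max r 0 ^ p := by
    rw [← Real.mul_rpow hc (le_max_right r 0), mul_max_of_nonneg _ _ hc, mul_zero]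
  rw [asymE, asymE, ← mul_neg, hmax, hmax]
  ring

lemma asymFlux_self (hp : 1 < p) : asymFlux p a a s = a ^ p * signedRpow s (p - 1) := by
  rw [asymFlux, ← mul_sub, max_rpow_sub_max_neg_rpow s (by linarith)]

lemma asymE_self (hp : 1 < p) : asymE p a a s = a ^ p * |s| ^ p := by
  rw [← asymFlux_mul_self a a s hp, asymFlux_self a s hp, mul_assoc, mul_comm _ s,
    self_mul_signedRpow s (by linarith), sub_add_cancel]

end AsymmetricIntegrands

section C1Functions

variable {α γ L : ℝ} {u u' : ℝ → ℝ}

lemma C1On.hasDerivAt (h : C1On α γ u u') {t : ℝ} (ht : t ∈ Ioo α γ) : HasDerivAt u (u' t) t :=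
  (h.1 t (Ioo_subset_Icc_self ht)).hasDerivAt (Icc_mem_nhds ht.1 ht.2)

lemma C1On.continuousOn (h : C1On α γ u u') : ContinuousOn u (Icc α γ) :=
  fun t ht ↦ (h.1 t ht).continuousWithinAt

lemma c1On_extendFrom {y₀ y₁ y₀' y₁' : ℝ} (h : α < γ)
    (hd : ∀ t ∈ Ioo α γ, HasDerivAt u (u' t) t) (hc : ContinuousOn u' (Ioo α γ))
    (h₀ : Tendsto u (𝓝[>] α) (𝓝 y₀)) (h₁ : Tendsto u (𝓝[<] γ) (𝓝 y₁))
    (h₀' : Tendsto u' (𝓝[>] α) (𝓝 y₀')) (h₁' : Tendsto u' (𝓝[<] γ) (𝓝 y₁')) :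
    C1On α γ (extendFrom (Ioo α γ) u) (extendFrom (Ioo α γ) u') := by
  have hu : ContinuousOn u (Ioo α γ) := fun t ht ↦ (hd t ht).continuousAt.continuousWithinAt
  have hU : ContinuousOn (extendFrom (Ioo α γ) u) (Icc α γ) :=
    continuousOn_Icc_extendFrom_Ioo hu h₀ h₁
  have hUd : ∀ t ∈ Ioo α γ, HasDerivAt (extendFrom (Ioo α γ) u) (u' t) t := fun t ht ↦
    (hd t ht).congr_of_eventuallyEq <| by
      filter_upwards [Ioo_mem_nhds ht.1 ht.2] with s hs using extendFrom_extends hu s hs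
  have hUdiff : DifferentiableOn ℝ (extendFrom (Ioo α γ) u) (Ioo α γ) :=
    fun t ht ↦ (hUd t ht).differentiableAt.differentiableWithinAt
  refine ⟨fun t ht ↦ ?_, continuousOn_Icc_extendFrom_Ioo hc h₀' h₁'⟩
  rcases ht.1.eq_or_lt with rfl | hαt
  · rw [eq_lim_at_left_extendFrom_Ioo h h₀']
    refine (hasDerivWithinAt_Ici_of_tendsto_deriv hUdiff
      ((hU _ ht).mono Ioo_subset_Icc_self) (Ioo_mem_nhdsGT h) ?_).mono Icc_subset_Ici_self
    exact h₀'.congr' <| by filter_upwards [Ioo_mem_nhdsGT h] with s hs using (hUd s hs).deriv.symm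
  rcases ht.2.eq_or_lt with rfl | htγ
  · rw [eq_lim_at_right_extendFrom_Ioo h h₁']
    refine (hasDerivWithinAt_Iic_of_tendsto_deriv hUdiff
      ((hU _ ht).mono Ioo_subset_Icc_self) (Ioo_mem_nhdsLT h) ?_).mono Icc_subset_Iic_self
    exact h₁'.congr' <| by filter_upwards [Ioo_mem_nhdsLT h] with s hs using (hUd s hs).deriv.symm
  · rw [extendFrom_extends hc t ⟨hαt, htγ⟩]
    exact (hUd t ⟨hαt, htγ⟩).hasDerivWithinAt

lemma Adm.const_mul (h : Adm L u u') (c : ℝ) : Adm L (fun t ↦ c * u t) (fun t ↦ c * u' t) :=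
  ⟨⟨fun t ht ↦ (h.1.1 t ht).const_mul c, continuousOn_const.mul h.1.2⟩,
    by simp only [h.2.1, mul_zero], by simp only [h.2.2, mul_zero]⟩

lemma Adm.neg (h : Adm L u u') : Adm L (fun t ↦ -u t) (fun t ↦ -u' t) := by
  simpa only [neg_one_mul] using h.const_mul (-1)

lemma adm_integral_of_integral_eq_zero {f : ℝ → ℝ} (hf : ContinuousOn f (Icc 0 L))
    (h0 : ∫ t in (0 : ℝ)..L, f t = 0) : Adm L (fun t ↦ ∫ s in (0 : ℝ)..t, f s) f := by
  refine ⟨⟨fun t ht ↦ ?_, hf⟩, intervalIntegral.integral_same, h0⟩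
  have : Fact (t ∈ Icc 0 L) := ⟨ht⟩
  exact intervalIntegral.integral_hasDerivWithinAt_right
    ((hf.mono (Icc_subset_Icc le_rfl ht.2)).intervalIntegrable_of_Icc ht.1)
    (hf.stronglyMeasurableAtFilter_nhdsWithin measurableSet_Icc t) (hf t ht)

lemma eqOn_zero_of_integral_mul_self_eq_zero {f : ℝ → ℝ} (h : α < γ)
    (hf : ContinuousOn f (Icc α γ)) (h0 : ∫ t in α..γ, f t * f t = 0) :
    EqOn f 0 (Icc α γ) := by
  intro t ht
  by_contra hne
  exact (intervalIntegral.integral_pos h (hf.mul hf) (fun _ _ ↦ mul_self_nonneg _)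
    ⟨t, ht, mul_self_pos.2 hne⟩).ne' h0

-- The du Bois-Reymond lemma: test against the primitive of `w` minus its mean.
lemma exists_eqOn_const_of_integral_mul_deriv_eq_zero (hL : 0 < L) {w : ℝ → ℝ}
    (hw : ContinuousOn w (Icc 0 L))
    (h : ∀ φ φ' : ℝ → ℝ, Adm L φ φ' → ∫ t in (0 : ℝ)..L, w t * φ' t = 0) :
    ∃ m : ℝ, EqOn w (fun _ ↦ m) (Icc 0 L) := by
  set m := (∫ t in (0 : ℝ)..L, w t) / L with hm
  have hd : ContinuousOn (fun t ↦ w t - m) (Icc 0 L) := hw.sub continuousOn_const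
  have hmean : ∫ t in (0 : ℝ)..L, (w t - m) = 0 := by
    rw [intervalIntegral.integral_sub (hw.intervalIntegrable_of_Icc hL.le)
      intervalIntegrable_const, intervalIntegral.integral_const, smul_eq_mul, sub_zero, hm,
      mul_div_cancel₀ _ hL.ne', sub_self]
  have htest := h _ _ (adm_integral_of_integral_eq_zero hd hmean)
  have hsq : ∫ t in (0 : ℝ)..L, (w t - m) * (w t - m) = 0 := by
    have hw' : IntervalIntegrable (fun t ↦ w t * (w t - m)) volume 0 L :=
      (hw.mul hd).intervalIntegrable_of_Icc hL.le
    simp only [sub_mul _ m]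
    rw [intervalIntegral.integral_sub hw' ((hd.intervalIntegrable_of_Icc hL.le).const_mul m),
      htest, intervalIntegral.integral_const_mul, hmean, mul_zero, sub_zero]
  exact ⟨m, fun t ht ↦ sub_eq_zero.1 (eqOn_zero_of_integral_mul_self_eq_zero hL hd hsq ht)⟩

lemma Adm.eqOn_zero_of_abs_deriv_eqOn_const (hL : 0 < L) (hu : Adm L u u') {m : ℝ}
    (hm : EqOn (fun t ↦ |u' t|) (fun _ ↦ m) (Icc 0 L)) : EqOn u 0 (Icc 0 L) := by
  obtain ⟨c, hc, hc0⟩ := exists_hasDerivAt_eq_zero hL hu.1.continuousOn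
    (hu.2.1.trans hu.2.2.symm) fun t ht ↦ hu.1.hasDerivAt ht
  have hm0 : m = 0 := by
    simpa only [hc0, abs_zero] using (hm (Ioo_subset_Icc_self hc)).symm
  intro t ht
  have hbound := (convex_Icc 0 L).norm_image_sub_le_of_norm_hasDerivWithin_le (C := 0) hu.1.1
    (fun s hs ↦ ((hm hs).trans hm0).le) ⟨le_rfl, hL.le⟩ ht
  simpa only [hu.2.1, sub_zero, zero_mul, norm_le_zero_iff, Pi.zero_apply] using hbound

lemma Adm.integral_abs_rpow_pos {p : ℝ} (hp : 0 ≤ p) (hL : 0 < L) (hu : Adm L u u')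
    (hpos : ∀ t ∈ Ioo 0 L, 0 < u t) : 0 < ∫ t in (0 : ℝ)..L, |u t| ^ p := by
  have hmid : L / 2 ∈ Ioo 0 L := ⟨half_pos hL, half_lt_self hL⟩
  exact intervalIntegral.integral_pos hL
    (hu.1.continuousOn.abs.rpow_const fun _ _ ↦ Or.inr hp) (fun _ _ ↦ by positivity)
    ⟨L / 2, Ioo_subset_Icc_self hmid, Real.rpow_pos_of_pos (abs_pos.2 (hpos _ hmid).ne') p⟩

end C1Functions

section WeakSolutions

variable {p a b L : ℝ} {u u' g : ℝ → ℝ}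

lemma IsWeakSol.integral_abs_rpow_deriv_mul_eq_zero (hp : 1 < p) (ha : 0 < a) (hb : 0 < b)
    (hab : a ≠ b) (hL : 0 ≤ L) (h : IsWeakSol p a b L u u' g)
    (hneg : IsWeakSol p a b L (fun t ↦ -u t) (fun t ↦ -u' t) (fun t ↦ -g t))
    {φ φ' : ℝ → ℝ} (hφ : Adm L φ φ') :
    ∫ t in (0 : ℝ)..L, |u' t| ^ (p - 1) * φ' t = 0 := by
  have hint {w : ℝ → ℝ} (hw : ContinuousOn w (Icc 0 L)) :
      IntervalIntegrable (fun t ↦ asymFlux p a b (w t) * φ' t) volume 0 L :=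
    (((continuous_asymFlux a b hp).comp_continuousOn hw).mul hφ.1.2).intervalIntegrable_of_Icc hL
  have hsum : (a ^ p - b ^ p) * ∫ t in (0 : ℝ)..L, |u' t| ^ (p - 1) * φ' t = 0 := by
    calc (a ^ p - b ^ p) * ∫ t in (0 : ℝ)..L, |u' t| ^ (p - 1) * φ' t
        = ∫ t in (0 : ℝ)..L, (asymFlux p a b (u' t) * φ' t + asymFlux p a b (-u' t) * φ' t) := by
          simp only [← intervalIntegral.integral_const_mul, ← add_mul,
            asymFlux_add_asymFlux_neg a b _ hp, mul_assoc]
      _ = (∫ t in (0 : ℝ)..L, g t * φ t) + ∫ t in (0 : ℝ)..L, -g t * φ t := by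
          rw [intervalIntegral.integral_add (hint h.1.1.2) (hint hneg.1.1.2), h.2 φ φ' hφ,
            hneg.2 φ φ' hφ]
      _ = 0 := by simp only [neg_mul, intervalIntegral.integral_neg, add_neg_cancel]
  have hne : a ^ p - b ^ p ≠ 0 :=
    sub_ne_zero.2 fun heq ↦ hab ((Real.rpow_left_inj ha.le hb.le (by linarith)).1 heq)
  exact (mul_eq_zero.1 hsum).resolve_left hne

theorem IsWeakSol.eqOn_zero_of_neg (hp : 1 < p) (ha : 0 < a) (hb : 0 < b) (hab : a ≠ b)
    (hL : 0 < L) (h : IsWeakSol p a b L u u' g)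
    (hneg : IsWeakSol p a b L (fun t ↦ -u t) (fun t ↦ -u' t) (fun t ↦ -g t)) :
    EqOn u 0 (Icc 0 L) := by
  have hp' : 0 < p - 1 := by linarith
  obtain ⟨m, hm⟩ := exists_eqOn_const_of_integral_mul_deriv_eq_zero hL
    (h.1.1.2.abs.rpow_const fun _ _ ↦ Or.inr hp'.le)
    fun _ _ hφ ↦ h.integral_abs_rpow_deriv_mul_eq_zero hp ha hb hab hL.le hneg hφ
  refine h.1.eqOn_zero_of_abs_deriv_eqOn_const (m := m ^ (p - 1)⁻¹) hL fun t ht ↦ ?_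
  simp only [← hm ht, Real.rpow_rpow_inv (abs_nonneg _) hp'.ne']

theorem IsWeakSol.of_hasDerivAt_asymFlux (hp : 1 < p) (hL : 0 ≤ L) (hu : Adm L u u')
    (hg : ContinuousOn g (Icc 0 L))
    (hflux : ∀ t ∈ Ioo 0 L, HasDerivAt (fun s ↦ asymFlux p a b (u' s)) (-g t) t) :
    IsWeakSol p a b L u u' g := by
  refine ⟨hu, fun φ φ' hφ ↦ ?_⟩
  have hf : ContinuousOn (fun t ↦ asymFlux p a b (u' t)) (Icc 0 L) :=
    (continuous_asymFlux a b hp).comp_continuousOn hu.1.2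
  have hfφ : IntervalIntegrable (fun t ↦ asymFlux p a b (u' t) * φ' t) volume 0 L :=
    (hf.mul hφ.1.2).intervalIntegrable_of_Icc hL
  have hgφ : IntervalIntegrable (fun t ↦ g t * φ t) volume 0 L :=
    (hg.mul hφ.1.continuousOn).intervalIntegrable_of_Icc hL
  have hparts : ∫ t in (0 : ℝ)..L, (asymFlux p a b (u' t) * φ' t - g t * φ t) =
      asymFlux p a b (u' L) * φ L - asymFlux p a b (u' 0) * φ 0 :=
    intervalIntegral.integral_eq_sub_of_hasDerivAt_of_le hL (hf.mul hφ.1.continuousOn)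
      (fun t ht ↦ ((hflux t ht).mul (hφ.1.hasDerivAt ht)).congr_deriv (by ring)) (hfφ.sub hgφ)
  rw [intervalIntegral.integral_sub hfφ hgφ, hφ.2.1, hφ.2.2, mul_zero, mul_zero,
    sub_zero] at hparts
  exact sub_eq_zero.1 hparts

lemma IsWeakSol.of_hasDerivAt_signedRpow {μ : ℝ} (hp : 1 < p) (hL : 0 ≤ L) (hu : Adm L u u')
    (hflux : ∀ t ∈ Ioo 0 L, HasDerivAt (fun s ↦ signedRpow (u' s) (p - 1))
      (-(μ * signedRpow (u t) (p - 1))) t) :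
    IsWeakSol p a a L u u' (fun t ↦ a ^ p * μ * |u t| ^ (p - 2) * u t) := by
  simp only [mul_assoc (a ^ p * μ), abs_rpow_sub_two_mul_self]
  refine .of_hasDerivAt_asymFlux hp hL hu (continuousOn_const.mul
    ((continuous_signedRpow (by linarith)).comp_continuousOn hu.1.continuousOn)) fun t ht ↦ ?_
  simp only [asymFlux_self a _ hp]
  exact ((hflux t ht).const_mul (a ^ p)).congr_deriv (by ring)

lemma IsWeakSol.neg (hp : 1 < p) (h : IsWeakSol p a a L u u' g) :
    IsWeakSol p a a L (fun t ↦ -u t) (fun t ↦ -u' t) (fun t ↦ -g t) := by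
  refine ⟨h.1.neg, fun φ φ' hφ ↦ ?_⟩
  have hodd (s : ℝ) : asymFlux p a a (-s) = -asymFlux p a a s := by
    rw [asymFlux_self a _ hp, asymFlux_self a _ hp, signedRpow_neg, mul_neg]
  simp only [hodd, neg_mul, intervalIntegral.integral_neg, h.2 φ φ' hφ]

lemma IsWeakSol.integral_asymE_eq {lam : ℝ} (hp : 1 < p)
    (h : IsWeakSol p a b L u u' (fun t ↦ lam * |u t| ^ (p - 2) * u t)) :
    ∫ t in (0 : ℝ)..L, asymE p a b (u' t) = lam * ∫ t in (0 : ℝ)..L, |u t| ^ p := by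
  have hpow (s : ℝ) : lam * |s| ^ (p - 2) * s * s = lam * |s| ^ p := by
    rw [mul_assoc lam, abs_rpow_sub_two_mul_self, mul_assoc, mul_comm _ s,
      self_mul_signedRpow s (by linarith), sub_add_cancel]
  simpa only [asymFlux_mul_self a b _ hp, hpow, intervalIntegral.integral_const_mul]
    using h.2 u u' h.1

theorem IsWeakSol.lam1_eq {lam : ℝ} (hp : 1 < p)
    (h : IsWeakSol p a b L u u' (fun t ↦ lam * |u t| ^ (p - 2) * u t))
    (hpos : 0 < ∫ t in (0 : ℝ)..L, |u t| ^ p)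
    (hle : ∀ v v' : ℝ → ℝ, Adm L v v' →
      lam * ∫ t in (0 : ℝ)..L, |v t| ^ p ≤ ∫ t in (0 : ℝ)..L, asymE p a b (v' t)) :
    lam1 p a b L = lam := by
  set I := ∫ t in (0 : ℝ)..L, |u t| ^ p with hI
  set c := I ^ (-p⁻¹) with hc
  have hc0 : 0 ≤ c := Real.rpow_nonneg hpos.le _
  have hcp : c ^ p = I⁻¹ := by
    rw [hc, ← Real.rpow_mul hpos.le, neg_mul, inv_mul_cancel₀ (by linarith), Real.rpow_neg_one]
  refine IsLeast.csInf_eq ⟨⟨_, _, h.1.const_mul c, ?_, ?_⟩, ?_⟩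
  · simp only [abs_mul, abs_of_nonneg hc0, Real.mul_rpow hc0 (abs_nonneg _), hcp,
      intervalIntegral.integral_const_mul]
    exact inv_mul_cancel₀ hpos.ne'
  · simp only [asymE_mul a b _ hc0, intervalIntegral.integral_const_mul, h.integral_asymE_eq hp,
      hcp, ← hI]
    field_simp
  · rintro E ⟨v, v', hv, hnorm, rfl⟩
    simpa only [hnorm, mul_one] using hle v v' hv

end WeakSolutions

section RiccatiPoincare

variable {p q L μ : ℝ} {T v v' : ℝ → ℝ}

lemma neg_le_mul_signedRpow_mul (hpq : p.HolderConjugate q) (s r w : ℝ) :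
    -(|w| ^ p + (p - 1) * |s| ^ q * |r| ^ p) ≤ p * (s * signedRpow r (p - 1) * w) := by
  have hyoung := Real.young_inequality w (-(s * signedRpow r (p - 1))) hpq
  have hpow : |-(s * signedRpow r (p - 1))| ^ q = |s| ^ q * |r| ^ p := by
    rw [abs_neg, abs_mul, abs_signedRpow r hpq.sub_one_pos.ne',
      Real.mul_rpow (abs_nonneg _) (by positivity), ← Real.rpow_mul (abs_nonneg r),
      hpq.sub_one_mul_conj]
  have hscale := mul_le_mul_of_nonneg_left hyoung hpq.nonneg
  rw [hpow, mul_add, mul_div_cancel₀ _ hpq.ne_zero, mul_div_left_comm,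
    hpq.div_conj_eq_sub_one] at hscale
  linarith

theorem Adm.poincare_of_riccati (hpq : p.HolderConjugate q) (hL : 0 ≤ L)
    (hT : ∀ t ∈ Icc 0 L, HasDerivAt T (μ + (p - 1) * |T t| ^ q) t) (hv : Adm L v v') :
    μ * ∫ t in (0 : ℝ)..L, |v t| ^ p ≤ ∫ t in (0 : ℝ)..L, |v' t| ^ p := by
  have hpow {w : ℝ → ℝ} (hw : ContinuousOn w (Icc 0 L)) :
      ContinuousOn (fun t ↦ |w t| ^ p) (Icc 0 L) :=
    hw.abs.rpow_const fun _ _ ↦ Or.inr hpq.nonneg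
  have hvp : ContinuousOn (fun t ↦ μ * |v t| ^ p) (Icc 0 L) :=
    continuousOn_const.mul (hpow hv.1.continuousOn)
  have hTc : ContinuousOn T (Icc 0 L) := fun t ht ↦ (hT t ht).continuousAt.continuousWithinAt
  have hle : ∫ t in (0 : ℝ)..L, (μ * |v t| ^ p - |v' t| ^ p) ≤
      T L * |v L| ^ p - T 0 * |v 0| ^ p := by
    refine intervalIntegral.integral_le_sub_of_hasDeriv_right_of_le hL
      (hTc.mul (hpow hv.1.continuousOn))
      (fun t ht ↦ ((hT t (Ioo_subset_Icc_self ht)).mul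
        ((hasDerivAt_abs_rpow_signedRpow (v t) hpq.lt).comp t
          (hv.1.hasDerivAt ht))).hasDerivWithinAt)
      ((hvp.sub (hpow hv.1.2)).integrableOn_Icc) fun t _ ↦ ?_
    have hyoung := neg_le_mul_signedRpow_mul hpq (T t) (v t) (v' t)
    simp only [Function.comp_apply]
    linarith
  rw [intervalIntegral.integral_sub (hvp.intervalIntegrable_of_Icc hL)
    ((hpow hv.1.2).intervalIntegrable_of_Icc hL), intervalIntegral.integral_const_mul, hv.2.1,
    hv.2.2, abs_zero, Real.zero_rpow hpq.ne_zero, mul_zero, mul_zero, sub_zero] at hle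
  exact sub_nonpos.1 hle

end RiccatiPoincare

section RiccatiEigenfunction

variable {p q L μ : ℝ}

/-- The profile `u` of an eigenfunction as a function of its Riccati variable
`s = -(|u'| ^ (p - 2) u') / u ^ (p - 1)`; `q` is the exponent conjugate to `p`. -/
noncomputable def riccatiAmplitude (p q μ s : ℝ) : ℝ := (μ + (p - 1) * |s| ^ q) ^ (-p⁻¹)

/-- The derivative `u'` of an eigenfunction as a function of its Riccati variable
`s = -(|u'| ^ (p - 2) u') / u ^ (p - 1)`; `q` is the exponent conjugate to `p`. -/
noncomputable def riccatiSlope (p q μ s : ℝ) : ℝ :=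
  -(signedRpow s (q - 1) * riccatiAmplitude p q μ s)

lemma riccatiAmplitude_neg (p q μ s : ℝ) :
    riccatiAmplitude p q μ (-s) = riccatiAmplitude p q μ s := by
  rw [riccatiAmplitude, riccatiAmplitude, abs_neg]

lemma riccatiSlope_neg (p q μ s : ℝ) : riccatiSlope p q μ (-s) = -riccatiSlope p q μ s := by
  rw [riccatiSlope, riccatiSlope, riccatiAmplitude_neg, signedRpow_neg, neg_mul]

lemma add_mul_abs_rpow_pos (hp : 1 < p) (hμ : 0 < μ) (q s : ℝ) : 0 < μ + (p - 1) * |s| ^ q :=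
  add_pos_of_pos_of_nonneg hμ (mul_nonneg (by linarith) (by positivity))

lemma riccatiAmplitude_pos (hp : 1 < p) (hμ : 0 < μ) (q s : ℝ) : 0 < riccatiAmplitude p q μ s :=
  Real.rpow_pos_of_pos (add_mul_abs_rpow_pos hp hμ q s) _

lemma hasDerivAt_riccatiAmplitude (hpq : p.HolderConjugate q) (hμ : 0 < μ) (s : ℝ) :
    HasDerivAt (riccatiAmplitude p q μ)
      (riccatiSlope p q μ s / (μ + (p - 1) * |s| ^ q)) s := by
  have hbase := add_mul_abs_rpow_pos hpq.lt hμ q s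
  have hd := ((hasDerivAt_abs_rpow_signedRpow s hpq.symm.lt).const_mul (p - 1)).const_add μ
  refine (hd.rpow_const (p := -p⁻¹) (Or.inl hbase.ne')).congr_deriv ?_
  rw [← mul_assoc (p - 1), hpq.sub_one_mul_conj, riccatiSlope, riccatiAmplitude,
    Real.rpow_sub_one hbase.ne']
  field_simp [hpq.ne_zero]

lemma continuous_riccatiSlope (hpq : p.HolderConjugate q) (hμ : 0 < μ) :
    Continuous (riccatiSlope p q μ) :=
  ((continuous_signedRpow hpq.symm.sub_one_pos).mul (continuous_iff_continuousAt.2 fun s ↦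
    (hasDerivAt_riccatiAmplitude hpq hμ s).continuousAt)).neg

lemma signedRpow_riccatiSlope (hpq : p.HolderConjugate q) (hμ : 0 < μ) (s : ℝ) :
    signedRpow (riccatiSlope p q μ s) (p - 1) = -(s * riccatiAmplitude p q μ s ^ (p - 1)) := by
  have hinv : (q - 1) * (p - 1) = 1 := by linarith [hpq.mul_eq_add]
  rw [riccatiSlope, signedRpow_neg, signedRpow_mul, signedRpow_signedRpow, hinv, signedRpow_one,
    signedRpow_of_pos (riccatiAmplitude_pos hpq.lt hμ q s)]

lemma tendsto_riccatiAmplitude_atTop (hpq : p.HolderConjugate q) :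
    Tendsto (riccatiAmplitude p q μ) atTop (𝓝 0) :=
  (tendsto_rpow_neg_atTop (inv_pos.2 hpq.pos)).comp <| tendsto_atTop_add_const_left _ μ <|
    ((tendsto_rpow_atTop hpq.symm.pos).comp tendsto_abs_atTop_atTop).const_mul_atTop hpq.sub_one_pos

lemma tendsto_riccatiAmplitude_atBot (hpq : p.HolderConjugate q) :
    Tendsto (riccatiAmplitude p q μ) atBot (𝓝 0) := by
  simpa only [Function.comp_def, riccatiAmplitude_neg] using
    (tendsto_riccatiAmplitude_atTop (μ := μ) hpq).comp tendsto_neg_atBot_atTop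

lemma riccatiSlope_of_pos (hpq : p.HolderConjugate q) (hμ : 0 < μ) {s : ℝ} (hs : 0 < s) :
    riccatiSlope p q μ s = -(μ * s ^ (-q) + (p - 1)) ^ (-p⁻¹) := by
  have hsq : s ^ (q - 1) = (s ^ (-q)) ^ (-p⁻¹) := by
    rw [← Real.rpow_mul hs.le, neg_mul_neg, ← div_eq_mul_inv, hpq.symm.div_conj_eq_sub_one]
  rw [riccatiSlope, riccatiAmplitude, signedRpow_of_pos hs, hsq, ← Real.mul_rpow (by positivity)
    (add_mul_abs_rpow_pos hpq.lt hμ q s).le, abs_of_pos hs, mul_add, mul_left_comm,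
    ← Real.rpow_add hs, neg_add_cancel, Real.rpow_zero, mul_one, mul_comm μ]

lemma tendsto_riccatiSlope_atTop (hpq : p.HolderConjugate q) (hμ : 0 < μ) :
    Tendsto (riccatiSlope p q μ) atTop (𝓝 (-(p - 1) ^ (-p⁻¹))) := by
  have hbase : Tendsto (fun s : ℝ ↦ μ * s ^ (-q) + (p - 1)) atTop (𝓝 (p - 1)) := by
    simpa only [mul_zero, zero_add] using
      ((tendsto_rpow_neg_atTop hpq.symm.pos).const_mul μ).add_const (p - 1)
  refine (hbase.rpow_const (Or.inl hpq.sub_one_pos.ne')).neg.congr' ?_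
  filter_upwards [eventually_gt_atTop 0] with s hs using (riccatiSlope_of_pos hpq hμ hs).symm

lemma tendsto_riccatiSlope_atBot (hpq : p.HolderConjugate q) (hμ : 0 < μ) :
    Tendsto (riccatiSlope p q μ) atBot (𝓝 ((p - 1) ^ (-p⁻¹))) := by
  simpa only [Function.comp_def, riccatiSlope_neg, neg_neg] using
    ((tendsto_riccatiSlope_atTop hpq hμ).comp tendsto_neg_atBot_atTop).neg

variable {T : ℝ → ℝ}

lemma hasDerivAt_riccatiAmplitude_comp (hpq : p.HolderConjugate q) (hμ : 0 < μ) {t : ℝ}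
    (hT : HasDerivAt T (μ + (p - 1) * |T t| ^ q) t) :
    HasDerivAt (fun s ↦ riccatiAmplitude p q μ (T s)) (riccatiSlope p q μ (T t)) t :=
  ((hasDerivAt_riccatiAmplitude hpq hμ (T t)).comp t hT).congr_deriv
    (div_mul_cancel₀ _ (add_mul_abs_rpow_pos hpq.lt hμ q (T t)).ne')

lemma hasDerivAt_signedRpow_riccatiSlope_comp (hpq : p.HolderConjugate q) (hμ : 0 < μ) {t : ℝ}
    (hT : HasDerivAt T (μ + (p - 1) * |T t| ^ q) t) :
    HasDerivAt (fun s ↦ signedRpow (riccatiSlope p q μ (T s)) (p - 1))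
      (-(μ * signedRpow (riccatiAmplitude p q μ (T t)) (p - 1))) t := by
  have hpos := riccatiAmplitude_pos hpq.lt hμ q (T t)
  simp only [signedRpow_riccatiSlope hpq hμ, signedRpow_of_pos hpos]
  have hA := (hasDerivAt_riccatiAmplitude_comp hpq hμ hT).rpow_const (p := p - 1)
    (Or.inl hpos.ne')
  refine (hT.mul hA).neg.congr_deriv ?_
  have hTq := self_mul_signedRpow (T t) (r := q - 1) (by linarith [hpq.symm.pos])
  rw [sub_add_cancel] at hTq
  rw [Real.rpow_sub_one hpos.ne' (p - 1), riccatiSlope, ← hTq]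
  field_simp
  ring

theorem exists_eigenfunction_of_riccati (hpq : p.HolderConjugate q) (hμ : 0 < μ) (hL : 0 < L)
    (hT : ∀ t ∈ Ioo 0 L, HasDerivAt T (μ + (p - 1) * |T t| ^ q) t)
    (h₀ : Tendsto T (𝓝[>] 0) atBot) (h₁ : Tendsto T (𝓝[<] L) atTop) :
    ∃ u u' : ℝ → ℝ, Adm L u u' ∧ (∀ t ∈ Ioo 0 L, 0 < u t) ∧
      ∀ t ∈ Ioo 0 L, HasDerivAt (fun s ↦ signedRpow (u' s) (p - 1))
        (-(μ * signedRpow (u t) (p - 1))) t := by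
  have hu : ∀ t ∈ Ioo 0 L, HasDerivAt (fun s ↦ riccatiAmplitude p q μ (T s))
      (riccatiSlope p q μ (T t)) t := fun t ht ↦ hasDerivAt_riccatiAmplitude_comp hpq hμ (hT t ht)
  have huc : ContinuousOn (fun t ↦ riccatiAmplitude p q μ (T t)) (Ioo 0 L) :=
    fun t ht ↦ (hu t ht).continuousAt.continuousWithinAt
  have hu'c : ContinuousOn (fun t ↦ riccatiSlope p q μ (T t)) (Ioo 0 L) :=
    (continuous_riccatiSlope hpq hμ).comp_continuousOn
      fun t ht ↦ (hT t ht).continuousAt.continuousWithinAt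
  have hu₀ := (tendsto_riccatiAmplitude_atBot (μ := μ) hpq).comp h₀
  have hu₁ := (tendsto_riccatiAmplitude_atTop (μ := μ) hpq).comp h₁
  refine ⟨_, _, ⟨c1On_extendFrom hL hu hu'c hu₀ hu₁ ((tendsto_riccatiSlope_atBot hpq hμ).comp h₀)
    ((tendsto_riccatiSlope_atTop hpq hμ).comp h₁), eq_lim_at_left_extendFrom_Ioo hL hu₀,
    eq_lim_at_right_extendFrom_Ioo hL hu₁⟩, fun t ht ↦ ?_, fun t ht ↦ ?_⟩
  · rw [extendFrom_extends huc t ht]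
    exact riccatiAmplitude_pos hpq.lt hμ q (T t)
  · rw [extendFrom_extends huc t ht]
    refine (hasDerivAt_signedRpow_riccatiSlope_comp hpq hμ (hT t ht)).congr_of_eventuallyEq ?_
    filter_upwards [Ioo_mem_nhds ht.1 ht.2] with s hs
    rw [extendFrom_extends hu'c s hs]

end RiccatiEigenfunction

section GeneralizedTangent

variable {q : ℝ}

/-- The generalized arctangent, the odd primitive of `(1 + |s| ^ q)⁻¹`. -/
noncomputable def genArctan (q x : ℝ) : ℝ := ∫ s in (0 : ℝ)..x, (1 + |s| ^ q)⁻¹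

/-- The generalized `π`, the length of the range of `genArctan q`. It equals `2π / (q sin (π / q))`,
the number usually written `π_q`. -/
noncomputable def genPi (q : ℝ) : ℝ := ∫ s : ℝ, (1 + |s| ^ q)⁻¹

/-- The generalized tangent, the inverse of `genArctan q`. It is meaningful only on the interval
`(-genPi q / 2, genPi q / 2)`. -/
noncomputable def genTan (q : ℝ) : ℝ → ℝ := Function.invFun (genArctan q)

lemma continuous_inv_one_add_abs_rpow (hq : 0 ≤ q) :
    Continuous fun s : ℝ ↦ (1 + |s| ^ q)⁻¹ :=
  (continuous_const.add (continuous_abs.rpow_const fun _ ↦ Or.inr hq)).inv₀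
    fun s ↦ (by positivity : 1 + |s| ^ q ≠ 0)

lemma integrable_inv_one_add_abs_rpow (hq : 1 < q) :
    Integrable fun s : ℝ ↦ (1 + |s| ^ q)⁻¹ := by
  have hdom : Integrable fun s : ℝ ↦ 2 ^ (q - 1) * (1 + ‖s‖) ^ (-q) :=
    (integrable_one_add_norm (by simpa using hq)).const_mul _
  refine hdom.mono' (continuous_inv_one_add_abs_rpow (by linarith)).aestronglyMeasurable
    (.of_forall fun s ↦ ?_)
  have hconvex : (1 + ‖s‖) ^ q ≤ 2 ^ (q - 1) * (1 + ‖s‖ ^ q) := by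
    simpa using NNReal.coe_le_coe.2 (NNReal.rpow_add_le_mul_rpow_add_rpow 1 ‖s‖₊ hq.le)
  rw [Real.norm_of_nonneg (by positivity), Real.rpow_neg (by positivity), ← div_eq_mul_inv,
    inv_le_iff_one_le_mul₀ (by positivity), div_mul_eq_mul_div, one_le_div (by positivity)]
  exact hconvex

lemma hasDerivAt_genArctan (hq : 0 ≤ q) (x : ℝ) :
    HasDerivAt (genArctan q) (1 + |x| ^ q)⁻¹ x :=
  ((continuous_inv_one_add_abs_rpow hq).integral_hasStrictDerivAt 0 x).hasDerivAt

lemma continuous_genArctan (hq : 0 ≤ q) : Continuous (genArctan q) :=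
  continuous_iff_continuousAt.2 fun x ↦ (hasDerivAt_genArctan hq x).continuousAt

lemma strictMono_genArctan (hq : 0 ≤ q) : StrictMono (genArctan q) :=
  strictMono_of_hasDerivAt_pos (hasDerivAt_genArctan hq) fun _ ↦ by positivity

lemma genArctan_neg (q x : ℝ) : genArctan q (-x) = -genArctan q x := by
  have h := intervalIntegral.integral_comp_neg (a := 0) (b := x) fun s : ℝ ↦ (1 + |s| ^ q)⁻¹
  simp only [abs_neg, neg_zero] at h
  rw [genArctan, intervalIntegral.integral_symm, ← h, genArctan]

lemma tendsto_genArctan_atTop (hq : 1 < q) :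
    Tendsto (genArctan q) atTop (𝓝 (genPi q / 2)) := by
  have hhalf : genPi q / 2 = ∫ s in Ioi (0 : ℝ), (1 + |s| ^ q)⁻¹ := by
    have h := integral_comp_abs (f := fun s : ℝ ↦ (1 + |s| ^ q)⁻¹)
    simp only [abs_abs] at h
    rw [genPi, h, mul_div_cancel_left₀ _ two_ne_zero]
  rw [hhalf]
  exact intervalIntegral_tendsto_integral_Ioi 0
    (integrable_inv_one_add_abs_rpow hq).integrableOn tendsto_id

lemma tendsto_genArctan_atBot (hq : 1 < q) :
    Tendsto (genArctan q) atBot (𝓝 (-(genPi q / 2))) := by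
  simpa only [Function.comp_def, genArctan_neg, neg_neg] using
    ((tendsto_genArctan_atTop hq).comp tendsto_neg_atBot_atTop).neg

lemma genArctan_lt (hq : 1 < q) (x : ℝ) : genArctan q x < genPi q / 2 :=
  have hmono := strictMono_genArctan (q := q) (by linarith)
  (hmono (lt_add_one x)).trans_le (hmono.monotone.ge_of_tendsto (tendsto_genArctan_atTop hq) _)

lemma lt_genArctan (hq : 1 < q) (x : ℝ) : -(genPi q / 2) < genArctan q x := by
  simpa only [genArctan_neg, neg_lt_neg_iff, neg_neg] using neg_lt_neg (genArctan_lt hq (-x))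

lemma genPi_pos (hq : 1 < q) : 0 < genPi q := by
  linarith [genArctan_lt hq 0, lt_genArctan hq 0]

lemma genTan_genArctan (hq : 0 ≤ q) (x : ℝ) : genTan q (genArctan q x) = x :=
  Function.leftInverse_invFun (strictMono_genArctan hq).injective x

lemma genArctan_genTan (hq : 1 < q) {t : ℝ} (ht : t ∈ Ioo (-(genPi q / 2)) (genPi q / 2)) :
    genArctan q (genTan q t) = t := by
  obtain ⟨x, hx⟩ := ((tendsto_genArctan_atBot hq).eventually_lt_const ht.1).exists
  obtain ⟨y, hy⟩ := ((tendsto_genArctan_atTop hq).eventually_const_lt ht.2).exists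
  exact Function.invFun_eq <| mem_range_of_exists_le_of_exists_ge
    (continuous_genArctan (by linarith)) ⟨x, hx.le⟩ ⟨y, hy.le⟩

lemma continuousAt_genTan (hq : 1 < q) {t : ℝ} (ht : t ∈ Ioo (-(genPi q / 2)) (genPi q / 2)) :
    ContinuousAt (genTan q) t := by
  have hq₀ : 0 ≤ q := by linarith
  have hmono : StrictMonoOn (genTan q) (Ioo (-(genPi q / 2)) (genPi q / 2)) := fun r hr s hs hrs ↦
    (strictMono_genArctan hq₀).lt_iff_lt.1 <| by
      rwa [genArctan_genTan hq hr, genArctan_genTan hq hs]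
  have himage : genTan q '' Ioo (-(genPi q / 2)) (genPi q / 2) = univ := eq_univ_of_forall fun x ↦
    ⟨genArctan q x, ⟨lt_genArctan hq x, genArctan_lt hq x⟩, genTan_genArctan hq₀ x⟩
  exact hmono.continuousAt_of_image_mem_nhds (Ioo_mem_nhds ht.1 ht.2) (himage ▸ univ_mem)

lemma hasDerivAt_genTan (hq : 1 < q) {t : ℝ} (ht : t ∈ Ioo (-(genPi q / 2)) (genPi q / 2)) :
    HasDerivAt (genTan q) (1 + |genTan q t| ^ q) t := by
  rw [← inv_inv (1 + |genTan q t| ^ q)]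
  refine (hasDerivAt_genArctan (by linarith) _).of_local_left_inverse (continuousAt_genTan hq ht)
    (by positivity) ?_
  filter_upwards [Ioo_mem_nhds ht.1 ht.2] with s hs using genArctan_genTan hq hs

lemma tendsto_genTan_atTop (hq : 1 < q) :
    Tendsto (genTan q) (𝓝[<] (genPi q / 2)) atTop := by
  refine tendsto_atTop.2 fun x ↦ ?_
  filter_upwards [Ioo_mem_nhdsLT (genArctan_lt hq x)] with t ht
  refine (strictMono_genArctan (by linarith)).le_iff_le.1 ?_
  rw [genArctan_genTan hq ⟨(lt_genArctan hq x).trans ht.1, ht.2⟩]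
  exact ht.1.le

lemma tendsto_genTan_atBot (hq : 1 < q) :
    Tendsto (genTan q) (𝓝[>] (-(genPi q / 2))) atBot := by
  refine tendsto_atBot.2 fun x ↦ ?_
  filter_upwards [Ioo_mem_nhdsGT (lt_genArctan hq x)] with t ht
  refine (strictMono_genArctan (by linarith)).le_iff_le.1 ?_
  rw [genArctan_genTan hq ⟨ht.1, ht.2.trans (genArctan_lt hq x)⟩]
  exact ht.2.le

end GeneralizedTangent

section RiccatiSolution

variable {p q k L : ℝ}

/-- The solution of the Riccati equation `T' = (p - 1) k ^ p + (p - 1) |T| ^ q` vanishing at the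
midpoint of `[0, L]`; it is the Riccati variable of an eigenfunction with eigenvalue
`(p - 1) k ^ p`. -/
noncomputable def riccatiTan (p q k L t : ℝ) : ℝ :=
  k ^ (p - 1) * genTan q ((p - 1) * k * (t - L / 2))

lemma hasDerivAt_riccatiTan (hpq : p.HolderConjugate q) (hk : 0 < k) {t : ℝ}
    (ht : (p - 1) * k * (t - L / 2) ∈ Ioo (-(genPi q / 2)) (genPi q / 2)) :
    HasDerivAt (riccatiTan p q k L) ((p - 1) * k ^ p + (p - 1) * |riccatiTan p q k L t| ^ q) t := by
  have harg : HasDerivAt (fun s ↦ (p - 1) * k * (s - L / 2)) ((p - 1) * k) t := by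
    simpa using ((hasDerivAt_id t).sub_const (L / 2)).const_mul ((p - 1) * k)
  have habs (s : ℝ) : |k ^ (p - 1) * s| ^ q = k ^ p * |s| ^ q := by
    rw [abs_mul, abs_of_pos (Real.rpow_pos_of_pos hk _), Real.mul_rpow (by positivity)
      (abs_nonneg s), ← Real.rpow_mul hk.le, hpq.sub_one_mul_conj]
  refine (((hasDerivAt_genTan hpq.symm.lt ht).comp t harg).const_mul (k ^ (p - 1))).congr_deriv ?_
  rw [riccatiTan, habs, Real.rpow_sub_one hk.ne']
  field_simp

lemma tendsto_riccatiTan_atTop (hpq : p.HolderConjugate q) (hk : 0 < k)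
    (hL : (p - 1) * k * L = genPi q) : Tendsto (riccatiTan p q k L) (𝓝[<] L) atTop := by
  have hslope : 0 < (p - 1) * k := mul_pos hpq.sub_one_pos hk
  have harg : Tendsto (fun t ↦ (p - 1) * k * (t - L / 2)) (𝓝[<] L) (𝓝[<] (genPi q / 2)) := by
    have hc : ContinuousWithinAt (fun t ↦ (p - 1) * k * (t - L / 2)) (Iio L) L := by fun_prop
    rw [← hL, show (p - 1) * k * L / 2 = (p - 1) * k * (L - L / 2) by ring]
    exact hc.tendsto_nhdsWithin fun t ht ↦
      mul_lt_mul_of_pos_left (sub_lt_sub_right ht _) hslope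
  exact ((tendsto_genTan_atTop hpq.symm.lt).comp harg).const_mul_atTop (Real.rpow_pos_of_pos hk _)

lemma tendsto_riccatiTan_atBot (hpq : p.HolderConjugate q) (hk : 0 < k)
    (hL : (p - 1) * k * L = genPi q) : Tendsto (riccatiTan p q k L) (𝓝[>] 0) atBot := by
  have hslope : 0 < (p - 1) * k := mul_pos hpq.sub_one_pos hk
  have harg : Tendsto (fun t ↦ (p - 1) * k * (t - L / 2)) (𝓝[>] 0) (𝓝[>] (-(genPi q / 2))) := by
    have hc : ContinuousWithinAt (fun t ↦ (p - 1) * k * (t - L / 2)) (Ioi 0) 0 := by fun_prop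
    rw [← hL, show -((p - 1) * k * L / 2) = (p - 1) * k * (0 - L / 2) by ring]
    exact hc.tendsto_nhdsWithin fun t ht ↦
      mul_lt_mul_of_pos_left (sub_lt_sub_right ht _) hslope
  exact ((tendsto_genTan_atBot hpq.symm.lt).comp harg).const_mul_atBot (Real.rpow_pos_of_pos hk _)

lemma exists_eigenfunction (hpq : p.HolderConjugate q) (hk : 0 < k) (hL : 0 < L)
    (hkL : (p - 1) * k * L = genPi q) :
    ∃ u u' : ℝ → ℝ, Adm L u u' ∧ (∀ t ∈ Ioo 0 L, 0 < u t) ∧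
      ∀ t ∈ Ioo 0 L, HasDerivAt (fun s ↦ signedRpow (u' s) (p - 1))
        (-((p - 1) * k ^ p * signedRpow (u t) (p - 1))) t := by
  have hslope : 0 < (p - 1) * k := mul_pos hpq.sub_one_pos hk
  refine exists_eigenfunction_of_riccati hpq (mul_pos hpq.sub_one_pos (Real.rpow_pos_of_pos hk p))
    hL (fun t ht ↦ hasDerivAt_riccatiTan hpq hk ⟨?_, ?_⟩)
    (tendsto_riccatiTan_atBot hpq hk hkL) (tendsto_riccatiTan_atTop hpq hk hkL)
  · nlinarith [mul_pos hslope ht.1]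
  · nlinarith [mul_pos hslope (sub_pos.2 ht.2)]

variable {v v' : ℝ → ℝ}

lemma Adm.poincare_of_lt (hpq : p.HolderConjugate q) (hk : 0 < k) (hL : 0 ≤ L)
    (hkL : (p - 1) * k * L < genPi q) (hv : Adm L v v') :
    (p - 1) * k ^ p * ∫ t in (0 : ℝ)..L, |v t| ^ p ≤ ∫ t in (0 : ℝ)..L, |v' t| ^ p := by
  have hslope : 0 < (p - 1) * k := mul_pos hpq.sub_one_pos hk
  refine hv.poincare_of_riccati hpq hL fun t ht ↦ hasDerivAt_riccatiTan (L := L) hpq hk ⟨?_, ?_⟩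
  · nlinarith [mul_nonneg hslope.le ht.1]
  · nlinarith [mul_nonneg hslope.le (sub_nonneg.2 ht.2)]

-- At the critical `k` the Riccati solution blows up at the endpoints, so `k` is approached from
-- below.
theorem Adm.poincare (hpq : p.HolderConjugate q) (hk : 0 < k) (hL : 0 < L)
    (hkL : (p - 1) * k * L = genPi q) (hv : Adm L v v') :
    (p - 1) * k ^ p * ∫ t in (0 : ℝ)..L, |v t| ^ p ≤ ∫ t in (0 : ℝ)..L, |v' t| ^ p := by
  have hlim : Tendsto (fun κ ↦ (p - 1) * κ ^ p * ∫ t in (0 : ℝ)..L, |v t| ^ p) (𝓝[<] k)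
      (𝓝 ((p - 1) * k ^ p * ∫ t in (0 : ℝ)..L, |v t| ^ p)) :=
    (((Real.continuousAt_rpow_const k p (Or.inl hk.ne')).tendsto.mono_left
      nhdsWithin_le_nhds).const_mul (p - 1)).mul_const _
  refine le_of_tendsto hlim ?_
  filter_upwards [Ioo_mem_nhdsLT hk] with κ hκ
  refine hv.poincare_of_lt hpq hκ.1 hL.le (hkL ▸ ?_)
  exact mul_lt_mul_of_pos_right (mul_lt_mul_of_pos_left hκ.2 hpq.sub_one_pos) hL

end RiccatiSolution

section SymmetricEigenvalue

variable {p a L : ℝ}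

theorem exists_pos_isWeakSol_lam1 (hp : 1 < p) (ha : 0 < a) (hL : 0 < L) :
    ∃ u u' : ℝ → ℝ, IsWeakSol p a a L u u' (fun t ↦ lam1 p a a L * |u t| ^ (p - 2) * u t) ∧
      ∀ t ∈ Ioo 0 L, 0 < u t := by
  have hpq : p.HolderConjugate p.conjExponent := .conjExponent hp
  set k := genPi p.conjExponent / ((p - 1) * L) with hk
  have hden : 0 < (p - 1) * L := mul_pos hpq.sub_one_pos hL
  have hk₀ : 0 < k := div_pos (genPi_pos hpq.symm.lt) hden
  have hkL : (p - 1) * k * L = genPi p.conjExponent := by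
    rw [mul_right_comm, hk, mul_div_cancel₀ _ hden.ne']
  obtain ⟨u, u', hu, hupos, hflux⟩ := exists_eigenfunction hpq hk₀ hL hkL
  have hweak := IsWeakSol.of_hasDerivAt_signedRpow (a := a) hp hL.le hu hflux
  have hlam1 : lam1 p a a L = a ^ p * ((p - 1) * k ^ p) :=
    hweak.lam1_eq hp (hu.integral_abs_rpow_pos hpq.nonneg hL hupos) fun v v' hv ↦ by
      simp only [asymE_self a _ hp, intervalIntegral.integral_const_mul, mul_assoc (a ^ p)]
      exact mul_le_mul_of_nonneg_left (hv.poincare hpq hk₀ hL hkL) (by positivity)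
  exact ⟨u, u', hlam1 ▸ hweak, hupos⟩

end SymmetricEigenvalue

theorem stmt5 (p a b L : ℝ) (hp : 1 < p) (ha : 0 < a) (hb : 0 < b) (hL : 0 < L) :
    (∃ u u' : ℝ → ℝ,
      IsWeakSol p a b L u u' (fun t => lam1 p a b L * |u t| ^ (p - 2) * u t) ∧
      (∀ t ∈ Set.Ioo (0:ℝ) L, 0 < u t) ∧
      IsWeakSol p a b L (fun t => -u t) (fun t => -u' t)
        (fun t => lam1 p a b L * |u t| ^ (p - 2) * (-u t))) ↔ a = b := by
  simp only [mul_neg]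
  constructor
  · rintro ⟨u, u', hu, hupos, huneg⟩
    by_contra hab
    have hmid : L / 2 ∈ Ioo 0 L := ⟨half_pos hL, half_lt_self hL⟩
    exact (hupos _ hmid).ne'
      (hu.eqOn_zero_of_neg hp ha hb hab hL huneg (Ioo_subset_Icc_self hmid))
  · rintro rfl
    obtain ⟨u, u', hu, hupos⟩ := exists_pos_isWeakSol_lam1 hp ha hL
    exact ⟨u, u', hu, hupos, hu.neg hp⟩
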